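/- Let η = (η^1, …, η^k) be a smooth ℝ^k-valued differential one-form on an open set U ⊆ ℝ^m with Reeb vector fields R_1, …, R_k, and let X_1, X_2 be η-Hamiltonian vector fields with η-Hamiltonian k-functions h_1 = (h_1^1,…,h_1^k) and h_2 = (h_2^1,…,h_2^k), respectively. Then for each α ∈ {1,…,k} and all x ∈ U: η^α_x([X_1, X_2](x)) = −(X_1h_2^α)(x) − Σ_{β=1}^k h_2^β(x)·(R_βh_1^α)(x). (In the notation of the paper: {h_1, h_2}_η = −L_{X_{h_1}}h_2 − R_{h_2}h_1, where {h_1,h_2}_η := η([X_{h_1}, X_{h_2}]).) -/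

import Mathlib

/-- Lie bracket of vector fields: `[X, Y](x) = DY(x)(X(x)) − DX(x)(Y(x))`. -/
noncomputable def lieBr {E : Type*} [NormedAddCommGroup E] [NormedSpace ℝ E]
    (X Y : E → E) : E → E :=
  fun x => fderiv ℝ Y x (X x) - fderiv ℝ X x (Y x)

/-- Exterior derivative of a one-form: `dθ_x(u, v) = Dθ(x)(u)(v) − Dθ(x)(v)(u)`. -/
noncomputable def extD {E : Type*} [NormedAddCommGroup E] [NormedSpace ℝ E]
    (θ : E → (E →L[ℝ] ℝ)) (x u v : E) : ℝ :=
  fderiv ℝ θ x u v - fderiv ℝ θ x v u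

/-!
Cartan's formula `dθ(X, Y) = X(θ Y) - Y(θ X) - θ([X, Y])`, applied to `θ = η^α`, `X = X₁`, `Y = X₂`,
expresses `η^α([X₁, X₂])` through `X₁h₂^α`, `X₂h₁^α` and `dη^α(X₁, X₂)`. The Hamiltonian equation
for `X₁` evaluates the last term to `X₂h₁^α + ∑_β (R_βh₁^α) h₂^β`, so that `X₂h₁^α` cancels.
-/

open scoped Topology

section

variable {E : Type*} [NormedAddCommGroup E] [NormedSpace ℝ E]

theorem apply_lieBr_eq_sub_extD {θ : E → E →L[ℝ] ℝ} {X Y : E → E} {x : E}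
    (hθ : DifferentiableAt ℝ θ x) (hX : DifferentiableAt ℝ X x) (hY : DifferentiableAt ℝ Y x) :
    θ x (lieBr X Y x) =
      fderiv ℝ (fun y => θ y (Y y)) x (X x) - fderiv ℝ (fun y => θ y (X y)) x (Y x) -
        extD θ x (X x) (Y x) := by
  simp only [lieBr, extD, fderiv_clm_apply hθ hX, fderiv_clm_apply hθ hY, map_sub, add_apply,
    ContinuousLinearMap.comp_apply, ContinuousLinearMap.flip_apply]
  ring

theorem apply_lieBr_of_eventuallyEq_neg {θ : E → E →L[ℝ] ℝ} {X Y : E → E} {f g : E → ℝ} {x : E}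
    (hθ : DifferentiableAt ℝ θ x) (hX : DifferentiableAt ℝ X x) (hY : DifferentiableAt ℝ Y x)
    (hf : (fun y => θ y (X y)) =ᶠ[𝓝 x] fun y => -f y)
    (hg : (fun y => θ y (Y y)) =ᶠ[𝓝 x] fun y => -g y) :
    θ x (lieBr X Y x) =
      fderiv ℝ f x (Y x) - fderiv ℝ g x (X x) - extD θ x (X x) (Y x) := by
  rw [apply_lieBr_eq_sub_extD hθ hX hY, hf.fderiv_eq, hg.fderiv_eq, fderiv_fun_neg, fderiv_fun_neg,
    neg_apply, neg_apply]
  ring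

/-- For the Hamiltonian equation relative to Reeb fields `R_β`, the coefficient `c α β` is the
derivative `R_βh₁^α`. -/
theorem stmt_8_general {ι : Type*} [Fintype ι] {U : Set E} (hU : IsOpen U)
    {η : ι → E → E →L[ℝ] ℝ} {X₁ X₂ : E → E} {h₁ h₂ : ι → E → ℝ} {c : ι → ι → E → ℝ}
    (hη : ∀ α, DifferentiableOn ℝ (η α) U)
    (hX₁ : DifferentiableOn ℝ X₁ U) (hX₂ : DifferentiableOn ℝ X₂ U)
    (hηX₁ : ∀ x ∈ U, ∀ α, η α x (X₁ x) = -h₁ α x)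
    (hηX₂ : ∀ x ∈ U, ∀ α, η α x (X₂ x) = -h₂ α x)
    (hdηX₁ : ∀ x ∈ U, ∀ α v,
      extD (η α) x (X₁ x) v = fderiv ℝ (h₁ α) x v - ∑ β, c α β x * η β x v)
    (α : ι) {x : E} (hx : x ∈ U) :
    η α x (lieBr X₁ X₂ x) = -fderiv ℝ (h₂ α) x (X₁ x) - ∑ β, h₂ β x * c α β x := by
  have hUx : U ∈ 𝓝 x := hU.mem_nhds hx
  have bracket_formula : η α x (lieBr X₁ X₂ x) =
      fderiv ℝ (h₁ α) x (X₂ x) - fderiv ℝ (h₂ α) x (X₁ x) - extD (η α) x (X₁ x) (X₂ x) :=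
    apply_lieBr_of_eventuallyEq_neg ((hη α).differentiableAt hUx) (hX₁.differentiableAt hUx)
      (hX₂.differentiableAt hUx) (Filter.eventually_of_mem hUx fun y hy => hηX₁ y hy α)
      (Filter.eventually_of_mem hUx fun y hy => hηX₂ y hy α)
  have extD_eq : extD (η α) x (X₁ x) (X₂ x) =
      fderiv ℝ (h₁ α) x (X₂ x) + ∑ β, h₂ β x * c α β x := by
    simp only [hdηX₁ x hx, hηX₂ x hx, mul_neg, Finset.sum_neg_distrib, sub_neg_eq_add, mul_comm]
  rw [bracket_formula, extD_eq]
  ring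

end

/-- **The k-contact bracket formula `{h_1, h_2}_η = −X_{h_1}h_2 − R_{h_2}h_1`.**
If `X_1, X_2` are `η`-Hamiltonian vector fields with `η`-Hamiltonian k-functions
`h_1, h_2` relative to a smooth `ℝ^k`-valued one-form `η` on an open `U ⊆ ℝ^m` with
Reeb vector fields `R_1, …, R_k`, then for every `α` and `x ∈ U`:
`η^α([X_1, X_2])(x) = −(X_1h_2^α)(x) − Σ_β h_2^β(x)·(R_βh_1^α)(x)`. -/
theorem stmt_8 (m k : ℕ) (U : Set (Fin m → ℝ)) (hU : IsOpen U)
    (η : Fin k → (Fin m → ℝ) → ((Fin m → ℝ) →L[ℝ] ℝ))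
    (hη : ∀ α, ContDiffOn ℝ (⊤ : ℕ∞) (η α) U)
    (R : Fin k → (Fin m → ℝ) → (Fin m → ℝ))
    (hRs : ∀ α, ContDiffOn ℝ (⊤ : ℕ∞) (R α) U)
    (hReeb : ∀ x ∈ U, ∀ α β : Fin k,
      η β x (R α x) = (if α = β then (1 : ℝ) else 0) ∧
      ∀ v, extD (η β) x (R α x) v = 0)
    (X₁ X₂ : (Fin m → ℝ) → (Fin m → ℝ))
    (hX₁ : ContDiffOn ℝ (⊤ : ℕ∞) X₁ U) (hX₂ : ContDiffOn ℝ (⊤ : ℕ∞) X₂ U)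
    (h₁ h₂ : Fin k → (Fin m → ℝ) → ℝ)
    (hh₁s : ∀ α, ContDiffOn ℝ (⊤ : ℕ∞) (h₁ α) U)
    (hh₂s : ∀ α, ContDiffOn ℝ (⊤ : ℕ∞) (h₂ α) U)
    (hHam₁ : ∀ x ∈ U, ∀ α : Fin k,
      η α x (X₁ x) = -(h₁ α x) ∧
      ∀ v, extD (η α) x (X₁ x) v =
        fderiv ℝ (h₁ α) x v - ∑ β, fderiv ℝ (h₁ α) x (R β x) * η β x v)
    (hHam₂ : ∀ x ∈ U, ∀ α : Fin k,
      η α x (X₂ x) = -(h₂ α x) ∧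
      ∀ v, extD (η α) x (X₂ x) v =
        fderiv ℝ (h₂ α) x v - ∑ β, fderiv ℝ (h₂ α) x (R β x) * η β x v) :
    ∀ α : Fin k, ∀ x ∈ U,
      η α x (lieBr X₁ X₂ x) =
        -(fderiv ℝ (h₂ α) x (X₁ x)) - ∑ β, h₂ β x * fderiv ℝ (h₁ α) x (R β x) := by
  intro α x hx
  exact stmt_8_general hU (fun α => (hη α).differentiableOn (by simp))
    (hX₁.differentiableOn (by simp)) (hX₂.differentiableOn (by simp))
    (fun y hy α => (hHam₁ y hy α).1) (fun y hy α => (hHam₂ y hy α).1)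
    (fun y hy α => (hHam₁ y hy α).2) α hx
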